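/- Let f : ℝ → ℝ be infinitely differentiable with compact support and let 1 < p < ∞. Then lim_{n→∞} ‖χ_n · S_n f − f‖_{L^p(ℝ)} = 0. -/

import Mathlib

open MeasureTheory Filter Set

/-- The `k`-th Hermite function
`h_k(x) = (-1)^k π^{-1/4} 2^{-k/2} (k!)^{-1/2} e^{x²/2} (d^k/dx^k)(e^{-x²})`. -/
noncomputable def hermiteFun (k : ℕ) (x : ℝ) : ℝ :=
  (-1 : ℝ) ^ k *
    (Real.pi ^ (-(1 : ℝ) / 4) * (2 : ℝ) ^ (-(k : ℝ) / 2) *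
      ((k.factorial : ℝ)) ^ (-(1 : ℝ) / 2)) *
    Real.exp (x ^ 2 / 2) * iteratedDeriv k (fun y : ℝ => Real.exp (-y ^ 2)) x

/-- The `n`-th partial sum of the Hermite series of `f`:
`S_n f = ∑_{k=0}^n (∫ f h_k) h_k`. -/
noncomputable def hermitePartialSum (n : ℕ) (f : ℝ → ℝ) (x : ℝ) : ℝ :=
  ∑ k ∈ Finset.range (n + 1), (∫ y : ℝ, f y * hermiteFun k y) * hermiteFun k x

/-! Write `A† = x - d/dx` and `A = x + d/dx` for the ladder operators. They shift the Hermite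
functions `h_k`, commute up to a scalar and are adjoint to each other. Since `A A†` has eigenvalue
`2 (k + 1)` on `h_k`, the Hermite coefficients of a Schwartz function decay faster than any power
of `k`, whereas a one-dimensional Sobolev inequality and the three-term recurrence bound every
`sup |x ^ m h_k|` polynomially in `k`. Hence `x ^ m S_n f` converges uniformly on `ℝ`.

Its limit is identified pointwise, without completeness of the Hermite system: subtracting from `f`
a multiple of the Gaussian `h_0` with the same value at `x`, what remains is `(· - x) q` for a
Schwartz function `q`, and by Christoffel–Darboux telescoping its partial sum at `x` is a single
boundary term, which tends to `0`.

Since `d/dx = (A - A†) / 2` and the ladder operators commute with the partial sums up to a shift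
of `n`, the derivatives converge as well. So `S_n f → f` in the Schwartz space, hence in every
`L^p`, and cutting off to `(-T, T)` costs at most `T⁻¹ ‖x f‖_p`. -/

section DilationAverage

open scoped SchwartzMap ContDiff Interval

variable {F : Type*} [NormedAddCommGroup F] [NormedSpace ℝ F]

/-- The average `∫ t in 0..1, tⁿ g(ty)` of `g` over the segment from `0` to `y`, weighted by `tⁿ`.
For `n = 0` and `g = f'` it is the quotient `(f(y) - f(0)) / y`, extended smoothly to `y = 0`. -/
noncomputable def dilationAverage (n : ℕ) (g : ℝ → F) (y : ℝ) : F :=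
  ∫ t in (0 : ℝ)..1, t ^ n • g (t * y)

theorem norm_dilationAverage_le {g : ℝ → F} {C : ℝ} (hg : ∀ y, ‖g y‖ ≤ C) (n : ℕ) (y : ℝ) :
    ‖dilationAverage n g y‖ ≤ C := by
  have hbound : ∀ t ∈ Ι (0 : ℝ) 1, ‖t ^ n • g (t * y)‖ ≤ C := by
    intro t ht
    rw [uIoc_of_le zero_le_one] at ht
    rw [norm_smul, norm_pow, Real.norm_of_nonneg ht.1.le]
    exact (mul_le_of_le_one_left (norm_nonneg _) (pow_le_one₀ ht.1.le ht.2)).trans (hg _)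
  simpa [dilationAverage] using intervalIntegral.norm_integral_le_of_norm_le_const hbound

theorem hasDerivAt_dilationAverage {g : ℝ → F} (hg : ContDiff ℝ 1 g) (n : ℕ) (y : ℝ) :
    HasDerivAt (dilationAverage n g) (dilationAverage (n + 1) (deriv g) y) y := by
  have hgc : Continuous g := hg.continuous
  have hgc' : Continuous (deriv g) := hg.continuous_deriv le_rfl
  obtain ⟨C, hC⟩ := (isCompact_closedBall (0 : ℝ) (|y| + 1)).exists_bound_of_continuousOn
    hgc'.continuousOn
  refine (intervalIntegral.hasDerivAt_integral_of_dominated_loc_of_deriv_le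
    (F := fun y t => t ^ n • g (t * y)) (F' := fun y t => t ^ (n + 1) • deriv g (t * y))
    (bound := fun _ => C) (Metric.ball_mem_nhds y one_pos)
    (Eventually.of_forall fun y => (by fun_prop : Continuous _).aestronglyMeasurable)
    ((by fun_prop : Continuous _).intervalIntegrable _ _)
    (by fun_prop : Continuous _).aestronglyMeasurable (ae_of_all _ fun t ht z hz => ?_)
    intervalIntegrable_const (ae_of_all _ fun t _ z _ => ?_)).2
  · rw [uIoc_of_le zero_le_one] at ht
    have hz' : |z| ≤ |y| + 1 := by
      have := abs_sub_abs_le_abs_sub z y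
      rw [Metric.mem_ball, Real.dist_eq] at hz
      linarith
    have hmem : t * z ∈ Metric.closedBall (0 : ℝ) (|y| + 1) := by
      rw [mem_closedBall_zero_iff, norm_mul, Real.norm_of_nonneg ht.1.le, Real.norm_eq_abs]
      exact (mul_le_of_le_one_left (abs_nonneg _) ht.2).trans hz'
    rw [norm_smul, norm_pow, Real.norm_of_nonneg ht.1.le]
    exact (mul_le_of_le_one_left (norm_nonneg _) (pow_le_one₀ ht.1.le ht.2)).trans (hC _ hmem)
  · exact (((hg.differentiable one_ne_zero (t * z)).hasDerivAt.scomp z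
      ((hasDerivAt_id' z).const_mul t)).const_smul (t ^ n)).congr_deriv
      (by rw [mul_one, smul_smul, pow_succ])

theorem contDiff_iteratedDeriv {g : ℝ → F} (hg : ContDiff ℝ ∞ g) (n : ℕ) :
    ContDiff ℝ ∞ (iteratedDeriv n g) :=
  iteratedDeriv_eq_iterate (f := g) ▸ hg.iterate_deriv n

theorem iteratedDeriv_dilationAverage {g : ℝ → F} (hg : ContDiff ℝ ∞ g) (m n : ℕ) :
    iteratedDeriv n (dilationAverage m g) = dilationAverage (m + n) (iteratedDeriv n g) := by
  induction n with
  | zero => simp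
  | succ n ih =>
    rw [iteratedDeriv_succ, ih, iteratedDeriv_succ]
    funext y
    exact (hasDerivAt_dilationAverage ((contDiff_iteratedDeriv hg n).of_le (by simp)) _ y).deriv

theorem contDiff_dilationAverage {g : ℝ → F} (hg : ContDiff ℝ ∞ g) (n : ℕ) :
    ContDiff ℝ ∞ (dilationAverage n g) := by
  refine contDiff_of_differentiable_iteratedDeriv fun m _ y => ?_
  rw [iteratedDeriv_dilationAverage hg]
  exact (hasDerivAt_dilationAverage ((contDiff_iteratedDeriv hg m).of_le (by simp))
    _ y).differentiableAt

theorem smul_dilationAverage_deriv [CompleteSpace F] {f : ℝ → F} (hf : ContDiff ℝ 1 f) (y : ℝ) :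
    y • dilationAverage 0 (deriv f) y = f y - f 0 := by
  have hderiv (t : ℝ) : HasDerivAt (fun t => f (t * y)) (y • deriv f (t * y)) t :=
    ((hf.differentiable one_ne_zero (t * y)).hasDerivAt.scomp t
      ((hasDerivAt_id' t).mul_const y)).congr_deriv (by rw [one_mul])
  have hcont : Continuous fun t => y • deriv f (t * y) := by
    have := hf.continuous_deriv le_rfl
    fun_prop
  have := intervalIntegral.integral_eq_sub_of_hasDerivAt (fun t _ => hderiv t)
    (hcont.intervalIntegrable 0 1)
  simpa [dilationAverage, intervalIntegral.integral_smul] using this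

theorem iteratedDeriv_succ_id_smul {q : ℝ → F} (hq : ContDiff ℝ ∞ q) (n : ℕ) (y : ℝ) :
    iteratedDeriv (n + 1) (fun y => y • q y) y =
      y • iteratedDeriv (n + 1) q y + (n + 1 : ℝ) • iteratedDeriv n q y := by
  have hd (n : ℕ) (y : ℝ) : HasDerivAt (iteratedDeriv n q) (iteratedDeriv (n + 1) q y) y := by
    rw [iteratedDeriv_succ]
    exact ((contDiff_iteratedDeriv hq n).differentiable (by simp) y).hasDerivAt
  induction n generalizing y with
  | zero =>
    have := ((hasDerivAt_id' y).fun_smul (hd 0 y)).deriv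
    simpa [iteratedDeriv_one, iteratedDeriv_zero] using this
  | succ n ih =>
    have := (((hasDerivAt_id' y).fun_smul (hd (n + 1) y)).fun_add
      ((hd n y).fun_const_smul (n + 1 : ℝ))).deriv
    rw [iteratedDeriv_succ, funext ih, this]
    push_cast
    module

theorem exists_bound_pow_mul_iteratedDeriv_of_id_smul (f : 𝓢(ℝ, F)) {q : ℝ → F}
    (hq : ContDiff ℝ ∞ q) (hfq : ∀ y, f y = y • q y)
    (hbound : ∀ n, ∃ C, ∀ y, ‖iteratedDeriv n q y‖ ≤ C) (k n : ℕ) :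
    ∃ C, ∀ y, ‖y‖ ^ k * ‖iteratedDeriv n q y‖ ≤ C := by
  induction k generalizing n with
  | zero => simpa using hbound n
  | succ k ih =>
    obtain ⟨B, hB⟩ := f.decay k n
    simp only [norm_iteratedFDeriv_eq_norm_iteratedDeriv] at hB
    cases n with
    | zero =>
      refine ⟨B, fun y => (hB.2 y).trans' (le_of_eq ?_)⟩
      simp [hfq, norm_smul, pow_succ, mul_assoc]
    | succ n =>
      obtain ⟨C, hC⟩ := ih n
      refine ⟨B + (n + 1) * C, fun y => ?_⟩
      have hleibniz : y • iteratedDeriv (n + 1) q y =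
          iteratedDeriv (n + 1) f y - (n + 1 : ℝ) • iteratedDeriv n q y := by
        rw [funext hfq, iteratedDeriv_succ_id_smul hq, add_sub_cancel_right]
      calc ‖y‖ ^ (k + 1) * ‖iteratedDeriv (n + 1) q y‖
          = ‖y‖ ^ k * ‖y • iteratedDeriv (n + 1) q y‖ := by rw [norm_smul, pow_succ, mul_assoc]
        _ ≤ ‖y‖ ^ k * (‖iteratedDeriv (n + 1) f y‖ + (n + 1) * ‖iteratedDeriv n q y‖) := by
            rw [hleibniz]
            gcongr
            refine (norm_sub_le _ _).trans_eq ?_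
            rw [norm_smul, Real.norm_of_nonneg (by positivity)]
        _ = ‖y‖ ^ k * ‖iteratedDeriv (n + 1) f y‖ +
              (n + 1) * (‖y‖ ^ k * ‖iteratedDeriv n q y‖) := by ring
        _ ≤ B + (n + 1) * C := by
            gcongr
            · exact hB.2 y
            · exact hC y

theorem exists_schwartzMap_eq_smul_of_apply_zero [CompleteSpace F] {f : 𝓢(ℝ, F)} (hf : f 0 = 0) :
    ∃ q : 𝓢(ℝ, F), ∀ y, f y = y • q y := by
  set q := dilationAverage 0 (deriv f)
  have hf' : ContDiff ℝ ∞ (deriv f) := (SchwartzMap.derivCLM ℝ F f).smooth'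
  have hq : ContDiff ℝ ∞ q := contDiff_dilationAverage hf' 0
  have hfq (y : ℝ) : f y = y • q y := by
    rw [smul_dilationAverage_deriv (f.smooth 1), hf, sub_zero]
  have hbound (n : ℕ) : ∃ C, ∀ y, ‖iteratedDeriv n q y‖ ≤ C := by
    obtain ⟨C, -, hC⟩ := f.decay 0 (n + 1)
    refine ⟨C, fun y => ?_⟩
    rw [iteratedDeriv_dilationAverage hf', ← iteratedDeriv_succ']
    refine norm_dilationAverage_le (fun y => ?_) _ y
    simpa [norm_iteratedFDeriv_eq_norm_iteratedDeriv] using hC y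
  refine ⟨⟨q, hq, fun k n => ?_⟩, hfq⟩
  simp only [norm_iteratedFDeriv_eq_norm_iteratedDeriv]
  exact exists_bound_pow_mul_iteratedDeriv_of_id_smul f hq hfq hbound k n

theorem exists_schwartzMap_eq_sub_smul [CompleteSpace F] {f : 𝓢(ℝ, F)} {a : ℝ} (hf : f a = 0) :
    ∃ q : 𝓢(ℝ, F), ∀ x, f x = (x - a) • q x := by
  obtain ⟨q, hq⟩ := exists_schwartzMap_eq_smul_of_apply_zero
    (f := SchwartzMap.compSubConstCLM ℝ (-a) f) (by simpa using hf)
  refine ⟨SchwartzMap.compSubConstCLM ℝ a q, fun x => ?_⟩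
  simpa using hq (x - a)

end DilationAverage

section Ladder

open scoped SchwartzMap ContDiff

/-- Multiplication by the variable, the position operator on Schwartz functions. -/
noncomputable def positionCLM : 𝓢(ℝ, ℝ) →L[ℝ] 𝓢(ℝ, ℝ) :=
  SchwartzMap.smulLeftCLM ℝ (fun x : ℝ => x)

theorem positionCLM_apply (f : 𝓢(ℝ, ℝ)) (x : ℝ) : positionCLM f x = x * f x := by
  rw [positionCLM, SchwartzMap.smulLeftCLM_apply_apply (by fun_prop), smul_eq_mul]

/-- The creation operator `f ↦ x f - f'`. -/
noncomputable def creationCLM : 𝓢(ℝ, ℝ) →L[ℝ] 𝓢(ℝ, ℝ) :=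
  positionCLM - SchwartzMap.derivCLM ℝ ℝ

/-- The annihilation operator `f ↦ x f + f'`, the adjoint of `creationCLM`. -/
noncomputable def annihilationCLM : 𝓢(ℝ, ℝ) →L[ℝ] 𝓢(ℝ, ℝ) :=
  positionCLM + SchwartzMap.derivCLM ℝ ℝ

theorem creationCLM_apply (f : 𝓢(ℝ, ℝ)) (x : ℝ) : creationCLM f x = x * f x - deriv f x := by
  simp [creationCLM, positionCLM_apply]

theorem annihilationCLM_apply (f : 𝓢(ℝ, ℝ)) (x : ℝ) :
    annihilationCLM f x = x * f x + deriv f x := by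
  simp [annihilationCLM, positionCLM_apply]

theorem creationCLM_add_annihilationCLM (f : 𝓢(ℝ, ℝ)) :
    creationCLM f + annihilationCLM f = (2 : ℝ) • positionCLM f := by
  simp only [creationCLM, annihilationCLM, sub_apply, add_apply]
  module

theorem annihilationCLM_sub_creationCLM (f : 𝓢(ℝ, ℝ)) :
    annihilationCLM f - creationCLM f = (2 : ℝ) • SchwartzMap.derivCLM ℝ ℝ f := by
  simp only [creationCLM, annihilationCLM, sub_apply, add_apply]
  module

theorem derivCLM_positionCLM (f : 𝓢(ℝ, ℝ)) :
    SchwartzMap.derivCLM ℝ ℝ (positionCLM f) = f + positionCLM (SchwartzMap.derivCLM ℝ ℝ f) := by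
  ext x
  have := ((hasDerivAt_id' x).fun_mul (f.hasDerivAt x)).deriv
  rw [one_mul] at this
  simpa only [SchwartzMap.derivCLM_apply, add_apply, positionCLM_apply,
    funext (positionCLM_apply f)] using this

theorem annihilationCLM_creationCLM (f : 𝓢(ℝ, ℝ)) :
    annihilationCLM (creationCLM f) = creationCLM (annihilationCLM f) + (2 : ℝ) • f := by
  simp only [creationCLM, annihilationCLM, sub_apply, add_apply, map_add, map_sub,
    derivCLM_positionCLM]
  module

theorem integrable_mul_schwartz (f g : 𝓢(ℝ, ℝ)) : Integrable fun x => f x * g x :=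
  (f.memLp 2).integrable_mul (g.memLp 2)

theorem integral_creationCLM_mul (f g : 𝓢(ℝ, ℝ)) :
    ∫ x, creationCLM f x * g x = ∫ x, f x * annihilationCLM g x := by
  have hparts : ∫ x, f x * deriv g x = -∫ x, deriv f x * g x :=
    SchwartzMap.integral_mul_deriv_eq_neg_deriv_mul f g
  calc ∫ x, creationCLM f x * g x
      = ∫ x, (f x * positionCLM g x - SchwartzMap.derivCLM ℝ ℝ f x * g x) := by
        congr 1 with x
        rw [creationCLM_apply, positionCLM_apply, SchwartzMap.derivCLM_apply]
        ring
    _ = (∫ x, f x * positionCLM g x) + ∫ x, f x * SchwartzMap.derivCLM ℝ ℝ g x := by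
        rw [integral_sub (integrable_mul_schwartz ..) (integrable_mul_schwartz ..)]
        simp only [SchwartzMap.derivCLM_apply]
        rw [hparts, sub_eq_add_neg]
    _ = ∫ x, f x * annihilationCLM g x := by
        rw [← integral_add (integrable_mul_schwartz ..) (integrable_mul_schwartz ..)]
        congr 1 with x
        rw [← mul_add]
        rfl

end Ladder

section Gaussian

open Polynomial
open scoped SchwartzMap ContDiff

theorem exists_bound_polynomial_mul_gaussian (P : ℝ[X]) :
    ∃ C, ∀ x : ℝ, |P.eval x * Real.exp (-(x ^ 2 / 2))| ≤ C := by
  induction P using Polynomial.induction_on' with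
  | add P Q hP hQ =>
    obtain ⟨C, hC⟩ := hP
    obtain ⟨D, hD⟩ := hQ
    refine ⟨C + D, fun x => ?_⟩
    rw [eval_add, add_mul]
    exact (abs_add_le _ _).trans (add_le_add (hC x) (hD x))
  | monomial n a =>
    refine ⟨|a| * (n.factorial * Real.exp (1 / 2)), fun x => ?_⟩
    have hpow : |x| ^ n ≤ n.factorial * Real.exp |x| := by
      have := Real.pow_div_factorial_le_exp |x| (abs_nonneg x) n
      rwa [div_le_iff₀' (by positivity)] at this
    have hexp : Real.exp |x| * Real.exp (-(x ^ 2 / 2)) ≤ Real.exp (1 / 2) := by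
      rw [← Real.exp_add, Real.exp_le_exp]
      nlinarith [sq_abs x, sq_nonneg (|x| - 1)]
    rw [eval_monomial, abs_mul, abs_mul, abs_pow, Real.abs_exp, mul_assoc]
    refine mul_le_mul_of_nonneg_left ?_ (abs_nonneg a)
    calc |x| ^ n * Real.exp (-(x ^ 2 / 2))
        ≤ n.factorial * Real.exp |x| * Real.exp (-(x ^ 2 / 2)) := by gcongr
      _ ≤ n.factorial * Real.exp (1 / 2) := by rw [mul_assoc]; gcongr

/-- The Gaussian `x ↦ exp (-x² / 2)` as a Schwartz function. -/
noncomputable def gaussianSchwartz : 𝓢(ℝ, ℝ) where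
  toFun x := Real.exp (-(x ^ 2 / 2))
  smooth' := by fun_prop
  decay' k n := by
    obtain ⟨C, hC⟩ := exists_bound_polynomial_mul_gaussian
      (X ^ k * (hermite n).map (Int.castRingHom ℝ))
    refine ⟨C, fun x => (hC x).trans' (le_of_eq ?_)⟩
    rw [norm_iteratedFDeriv_eq_norm_iteratedDeriv, iteratedDeriv_eq_iterate,
      deriv_gaussian_eq_hermite_mul_gaussian]
    simp [abs_mul, mul_assoc, Polynomial.eval_map, Polynomial.aeval_def]

theorem gaussianSchwartz_apply (x : ℝ) : gaussianSchwartz x = Real.exp (-(x ^ 2 / 2)) := rfl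

theorem annihilationCLM_gaussianSchwartz : annihilationCLM gaussianSchwartz = 0 := by
  ext x
  have hderiv : HasDerivAt gaussianSchwartz (-x * gaussianSchwartz x) x :=
    (((hasDerivAt_pow 2 x).div_const 2).fun_neg.exp).congr_deriv
      (by rw [gaussianSchwartz_apply]; push_cast; ring)
  rw [annihilationCLM_apply, hderiv.deriv, zero_apply]
  ring

theorem integral_gaussianSchwartz_sq :
    ∫ x, gaussianSchwartz x * gaussianSchwartz x = √Real.pi := by
  have := integral_gaussian 1
  rw [div_one] at this
  rw [← this]
  congr 1 with x
  rw [gaussianSchwartz_apply, ← Real.exp_add]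
  ring_nf

end Gaussian

section HermiteFunctions

open scoped SchwartzMap ContDiff

/-- The Hermite function `hermiteFun k` as a Schwartz function, obtained from the ground state
`π^{-1/4} exp (-x²/2)` by applying the creation operator `k` times. -/
noncomputable def hermiteSchwartz : ℕ → 𝓢(ℝ, ℝ)
  | 0 => Real.pi ^ (-(1 : ℝ) / 4) • gaussianSchwartz
  | k + 1 => (√(2 * (k + 1)))⁻¹ • creationCLM (hermiteSchwartz k)

theorem creationCLM_hermiteSchwartz (k : ℕ) :
    creationCLM (hermiteSchwartz k) = √(2 * (k + 1)) • hermiteSchwartz (k + 1) := by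
  rw [hermiteSchwartz, smul_inv_smul₀ (by positivity)]

theorem hermite_normalization_eq_sqrt_mul_succ (k : ℕ) :
    Real.pi ^ (-(1 : ℝ) / 4) * (2 : ℝ) ^ (-(k : ℝ) / 2) * (k.factorial : ℝ) ^ (-(1 : ℝ) / 2) =
      √(2 * (k + 1)) * (Real.pi ^ (-(1 : ℝ) / 4) * (2 : ℝ) ^ (-((k + 1 : ℕ) : ℝ) / 2) *
        ((k + 1).factorial : ℝ) ^ (-(1 : ℝ) / 2)) := by
  have htwo : (2 : ℝ) ^ (-((k + 1 : ℕ) : ℝ) / 2) = 2 ^ (-(k : ℝ) / 2) * (√2)⁻¹ := by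
    rw [Real.sqrt_eq_rpow, ← Real.rpow_neg zero_le_two, ← Real.rpow_add two_pos]
    push_cast
    ring_nf
  have hfactorial : ((k + 1).factorial : ℝ) ^ (-(1 : ℝ) / 2) =
      (√(k + 1))⁻¹ * (k.factorial : ℝ) ^ (-(1 : ℝ) / 2) := by
    rw [Nat.factorial_succ, Nat.cast_mul, Real.mul_rpow (by positivity) (by positivity),
      neg_div, Real.rpow_neg (by positivity : (0 : ℝ) ≤ (k + 1 : ℕ)), ← Real.sqrt_eq_rpow,
      Nat.cast_succ]
  rw [htwo, hfactorial, Real.sqrt_mul zero_le_two]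
  field_simp

theorem hasDerivAt_hermiteFun (k : ℕ) (x : ℝ) :
    HasDerivAt (hermiteFun k) (x * hermiteFun k x - √(2 * (k + 1)) * hermiteFun (k + 1) x) x := by
  have hsmooth : ContDiff ℝ ∞ fun y : ℝ => Real.exp (-y ^ 2) := by fun_prop
  have hderiv : HasDerivAt (iteratedDeriv k fun y : ℝ => Real.exp (-y ^ 2))
      (iteratedDeriv (k + 1) (fun y : ℝ => Real.exp (-y ^ 2)) x) x := by
    rw [iteratedDeriv_succ]
    exact ((contDiff_iteratedDeriv hsmooth k).differentiable (by simp) x).hasDerivAt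
  have hexp : HasDerivAt (fun x : ℝ => Real.exp (x ^ 2 / 2)) (x * Real.exp (x ^ 2 / 2)) x :=
    (((hasDerivAt_pow 2 x).div_const 2).exp).congr_deriv (by push_cast; ring)
  refine ((hexp.const_mul _).fun_mul hderiv).congr_deriv ?_
  simp only [hermiteFun]
  rw [hermite_normalization_eq_sqrt_mul_succ k]
  ring

theorem hermiteSchwartz_apply (k : ℕ) (x : ℝ) : hermiteSchwartz k x = hermiteFun k x := by
  induction k generalizing x with
  | zero =>
    have hexp : Real.exp (x ^ 2 / 2) * Real.exp (-x ^ 2) = Real.exp (-(x ^ 2 / 2)) := by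
      rw [← Real.exp_add]
      ring_nf
    simp [hermiteSchwartz, hermiteFun, gaussianSchwartz_apply, mul_assoc, hexp]
  | succ k ih =>
    rw [hermiteSchwartz, smul_apply, creationCLM_apply, funext ih,
      (hasDerivAt_hermiteFun k x).deriv, sub_sub_cancel, smul_eq_mul,
      inv_mul_cancel_left₀ (by positivity)]

/- At `k = 0` the index `k - 1` is truncated, but the factor `√(2 k)` vanishes. -/
theorem annihilationCLM_hermiteSchwartz (k : ℕ) :
    annihilationCLM (hermiteSchwartz k) = √(2 * k) • hermiteSchwartz (k - 1) := by
  induction k with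
  | zero => simp [hermiteSchwartz, annihilationCLM_gaussianSchwartz]
  | succ k ih =>
    have hnumber : creationCLM (annihilationCLM (hermiteSchwartz k)) =
        (2 * k : ℝ) • hermiteSchwartz k := by
      rw [ih, map_smul]
      cases k with
      | zero => simp
      | succ k =>
        rw [Nat.add_sub_cancel, creationCLM_hermiteSchwartz, smul_smul, Nat.cast_succ,
          Real.mul_self_sqrt (by positivity)]
    rw [hermiteSchwartz, map_smul, annihilationCLM_creationCLM, hnumber, ← add_smul, smul_smul,
      Nat.add_sub_cancel, Nat.cast_succ]
    congr 1
    rw [inv_mul_eq_div, ← mul_add_one, Real.div_sqrt]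

/-- The `k`-th Hermite coefficient `f ↦ ∫ f h_k`. -/
noncomputable def hermiteCoeff (k : ℕ) : 𝓢(ℝ, ℝ) →L[ℝ] ℝ :=
  (SchwartzMap.integralCLM ℝ volume).comp (SchwartzMap.smulLeftCLM ℝ (hermiteSchwartz k))

theorem hermiteCoeff_apply (k : ℕ) (f : 𝓢(ℝ, ℝ)) :
    hermiteCoeff k f = ∫ x, hermiteSchwartz k x * f x := by
  simp [hermiteCoeff, SchwartzMap.integralCLM_apply,
    SchwartzMap.smulLeftCLM_apply_apply (hermiteSchwartz k).hasTemperateGrowth]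

theorem hermiteCoeff_annihilationCLM (k : ℕ) (f : 𝓢(ℝ, ℝ)) :
    hermiteCoeff k (annihilationCLM f) = √(2 * (k + 1)) * hermiteCoeff (k + 1) f := by
  simp_rw [hermiteCoeff_apply, ← integral_creationCLM_mul, creationCLM_hermiteSchwartz,
    smul_apply, smul_eq_mul, mul_assoc, integral_const_mul]

theorem hermiteCoeff_creationCLM (k : ℕ) (f : 𝓢(ℝ, ℝ)) :
    hermiteCoeff k (creationCLM f) = √(2 * k) * hermiteCoeff (k - 1) f := by
  simp_rw [hermiteCoeff_apply, mul_comm (hermiteSchwartz _ _), integral_creationCLM_mul,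
    annihilationCLM_hermiteSchwartz, smul_apply, smul_eq_mul, mul_left_comm (f _),
    integral_const_mul]

theorem hermiteCoeff_hermiteSchwartz_self (k : ℕ) : hermiteCoeff k (hermiteSchwartz k) = 1 := by
  induction k with
  | zero =>
    simp_rw [hermiteCoeff_apply, hermiteSchwartz, smul_apply, smul_eq_mul,
      mul_mul_mul_comm, integral_const_mul, integral_gaussianSchwartz_sq, Real.sqrt_eq_rpow]
    rw [← Real.rpow_add Real.pi_pos, ← Real.rpow_add Real.pi_pos]
    norm_num
  | succ k ih =>
    rw [hermiteSchwartz, map_smul, hermiteCoeff_creationCLM, Nat.add_sub_cancel, ih, mul_one,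
      Nat.cast_succ, smul_eq_mul, inv_mul_cancel₀ (by positivity)]

theorem hermiteCoeff_succ_hermiteSchwartz_zero (k : ℕ) :
    hermiteCoeff (k + 1) (hermiteSchwartz 0) = 0 := by
  have h := hermiteCoeff_annihilationCLM k (hermiteSchwartz 0)
  rw [annihilationCLM_hermiteSchwartz] at h
  exact (mul_eq_zero.1 (h.symm.trans (by simp))).resolve_left (by positivity)

end HermiteFunctions

section Bounds

open scoped SchwartzMap Topology

theorem sq_le_integral_sq_add_integral_sq {u u' : ℝ → ℝ} (hderiv : ∀ x, HasDerivAt u (u' x) x)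
    (hu : MemLp u 2) (hu' : MemLp u' 2) (x : ℝ) :
    u x ^ 2 ≤ (∫ y, u y ^ 2) + ∫ y, u' y ^ 2 := by
  have hsq (y : ℝ) : HasDerivAt (fun y => u y ^ 2) (2 * (u y * u' y)) y :=
    ((hderiv y).fun_pow 2).congr_deriv (by push_cast; ring)
  have hint : Integrable fun y => 2 * (u y * u' y) := (hu.integrable_mul hu').const_mul 2
  have hlim : Tendsto (fun y => u y ^ 2) atBot (𝓝 0) :=
    tendsto_zero_of_hasDerivAt_of_integrableOn_Iic (fun y _ => hsq y) hint.integrableOn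
      hu.integrable_sq.integrableOn (a := x)
  have hsum : Integrable fun y => u y ^ 2 + u' y ^ 2 := hu.integrable_sq.add hu'.integrable_sq
  calc u x ^ 2 = ∫ y in Iic x, 2 * (u y * u' y) := by
        rw [integral_Iic_of_hasDerivAt_of_tendsto' (fun y _ => hsq y) hint.integrableOn hlim,
          sub_zero]
    _ ≤ ∫ y in Iic x, (u y ^ 2 + u' y ^ 2) :=
        setIntegral_mono hint.integrableOn hsum.integrableOn fun y => by
          nlinarith [sq_nonneg (u y - u' y)]
    _ ≤ ∫ y, (u y ^ 2 + u' y ^ 2) :=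
        setIntegral_le_integral hsum (ae_of_all _ fun y => by positivity)
    _ = (∫ y, u y ^ 2) + ∫ y, u' y ^ 2 := integral_add hu.integrable_sq hu'.integrable_sq

theorem memLp_deriv_schwartz {F : Type*} [NormedAddCommGroup F] [NormedSpace ℝ F] (f : 𝓢(ℝ, F))
    (p : ENNReal) : MemLp (deriv f) p :=
  (SchwartzMap.derivCLM ℝ F f).memLp p volume

theorem integral_hermiteSchwartz_sq (k : ℕ) : ∫ x, hermiteSchwartz k x ^ 2 = 1 := by
  simp_rw [sq, ← hermiteCoeff_apply, hermiteCoeff_hermiteSchwartz_self]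

theorem two_mul_deriv_hermiteSchwartz (k : ℕ) (x : ℝ) :
    2 * deriv (hermiteSchwartz k) x =
      √(2 * k) * hermiteSchwartz (k - 1) x - √(2 * (k + 1)) * hermiteSchwartz (k + 1) x := by
  have := DFunLike.congr_fun (annihilationCLM_sub_creationCLM (hermiteSchwartz k)) x
  rw [annihilationCLM_hermiteSchwartz, creationCLM_hermiteSchwartz] at this
  exact this.symm

theorem two_mul_mul_hermiteSchwartz (k : ℕ) (x : ℝ) :
    2 * (x * hermiteSchwartz k x) =
      √(2 * (k + 1)) * hermiteSchwartz (k + 1) x + √(2 * k) * hermiteSchwartz (k - 1) x := by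
  have := DFunLike.congr_fun (creationCLM_add_annihilationCLM (hermiteSchwartz k)) x
  rw [annihilationCLM_hermiteSchwartz, creationCLM_hermiteSchwartz] at this
  simpa only [add_apply, smul_apply, smul_eq_mul, positionCLM_apply] using this.symm

theorem integral_deriv_hermiteSchwartz_sq_le (k : ℕ) :
    ∫ x, deriv (hermiteSchwartz k) x ^ 2 ≤ 2 * k + 1 := by
  have hint (j : ℕ) : Integrable fun x => hermiteSchwartz j x ^ 2 :=
    ((hermiteSchwartz j).memLp 2).integrable_sq
  calc ∫ x, deriv (hermiteSchwartz k) x ^ 2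
      ≤ ∫ x, (k * hermiteSchwartz (k - 1) x ^ 2 + (k + 1) * hermiteSchwartz (k + 1) x ^ 2) := by
        refine integral_mono (memLp_deriv_schwartz _ 2).integrable_sq
          (((hint _).const_mul _).add ((hint _).const_mul _)) fun x => ?_
        have h₁ := Real.sq_sqrt (by positivity : (0 : ℝ) ≤ 2 * k)
        have h₂ := Real.sq_sqrt (by positivity : (0 : ℝ) ≤ 2 * (k + 1))
        have hderiv := two_mul_deriv_hermiteSchwartz k x
        have hparallelogram := add_sq_le (a := √(2 * k) * hermiteSchwartz (k - 1) x)
          (b := -(√(2 * (k + 1)) * hermiteSchwartz (k + 1) x))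
        rw [← sub_eq_add_neg, ← hderiv, neg_sq, mul_pow, mul_pow, mul_pow, h₁, h₂]
          at hparallelogram
        linarith
    _ = 2 * k + 1 := by
        rw [integral_add ((hint _).const_mul _) ((hint _).const_mul _), integral_const_mul,
          integral_const_mul, integral_hermiteSchwartz_sq, integral_hermiteSchwartz_sq]
        ring

theorem abs_hermiteSchwartz_le (k : ℕ) (x : ℝ) : |hermiteSchwartz k x| ≤ k + 2 := by
  refine abs_le_of_sq_le_sq ?_ (by positivity)
  have hsobolev := sq_le_integral_sq_add_integral_sq (hermiteSchwartz k).hasDerivAt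
    ((hermiteSchwartz k).memLp 2) (memLp_deriv_schwartz (hermiteSchwartz k) 2) x
  rw [integral_hermiteSchwartz_sq] at hsobolev
  nlinarith [integral_deriv_hermiteSchwartz_sq_le k]

theorem abs_pow_mul_abs_hermiteSchwartz_le (m k : ℕ) (x : ℝ) :
    |x| ^ m * |hermiteSchwartz k x| ≤ (k + m + 2) ^ (m + 1) := by
  induction m generalizing k with
  | zero => simpa using abs_hermiteSchwartz_le k x
  | succ m ih =>
    have hsucc : √(2 * (k + 1)) ≤ (k + m + 3 : ℝ) := Real.sqrt_le_iff.2
      ⟨by positivity, by nlinarith [(k.cast_nonneg : (0 : ℝ) ≤ k), (m.cast_nonneg : (0 : ℝ) ≤ m)]⟩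
    have hself : √(2 * k) ≤ (k + m + 3 : ℝ) := (Real.sqrt_le_sqrt (by linarith)).trans hsucc
    have hup : |x| ^ m * |hermiteSchwartz (k + 1) x| ≤ (k + m + 3) ^ (m + 1) :=
      (ih (k + 1)).trans_eq (by push_cast; ring)
    have hdown : |x| ^ m * |hermiteSchwartz (k - 1) x| ≤ (k + m + 3) ^ (m + 1) := by
      refine (ih (k - 1)).trans (pow_le_pow_left₀ (by positivity) ?_ _)
      have : ((k - 1 : ℕ) : ℝ) ≤ k := by exact_mod_cast Nat.sub_le k 1
      linarith
    have hrec : 2 * (|x| * |hermiteSchwartz k x|) ≤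
        √(2 * (k + 1)) * |hermiteSchwartz (k + 1) x| + √(2 * k) * |hermiteSchwartz (k - 1) x| := by
      rw [← abs_mul, ← abs_two, ← abs_mul, two_mul_mul_hermiteSchwartz]
      refine (abs_add_le _ _).trans_eq ?_
      simp only [abs_mul, abs_of_nonneg (Real.sqrt_nonneg _), abs_two]
    calc |x| ^ (m + 1) * |hermiteSchwartz k x|
        = |x| ^ m * (2 * (|x| * |hermiteSchwartz k x|)) / 2 := by ring
      _ ≤ |x| ^ m * (√(2 * (k + 1)) * |hermiteSchwartz (k + 1) x| +
            √(2 * k) * |hermiteSchwartz (k - 1) x|) / 2 := by gcongr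
      _ = (√(2 * (k + 1)) * (|x| ^ m * |hermiteSchwartz (k + 1) x|) +
            √(2 * k) * (|x| ^ m * |hermiteSchwartz (k - 1) x|)) / 2 := by ring
      _ ≤ ((k + m + 3) * (k + m + 3) ^ (m + 1) + (k + m + 3) * (k + m + 3) ^ (m + 1)) / 2 := by
          gcongr
      _ = (k + (m + 1 : ℕ) + 2) ^ (m + 1 + 1) := by push_cast; ring

theorem exists_bound_abs_hermiteCoeff_mul_pow (f : 𝓢(ℝ, ℝ)) (m : ℕ) :
    ∃ C, ∀ k : ℕ, |hermiteCoeff k f| * (k + 1) ^ m ≤ C := by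
  induction m generalizing f with
  | zero =>
    refine ⟨(1 + ∫ x, f x ^ 2) / 2, fun k => ?_⟩
    have hint (g : 𝓢(ℝ, ℝ)) : Integrable fun x => g x ^ 2 := (g.memLp 2).integrable_sq
    rw [pow_zero, mul_one, hermiteCoeff_apply, ← integral_hermiteSchwartz_sq k,
      ← integral_add (hint _) (hint _), ← integral_div, ← Real.norm_eq_abs]
    refine norm_integral_le_of_norm_le (((hint (hermiteSchwartz k)).add (hint f)).div_const 2)
      (ae_of_all _ fun x => ?_)
    rw [Real.norm_eq_abs, abs_le]
    constructor <;> nlinarith [sq_nonneg (hermiteSchwartz k x + f x),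
      sq_nonneg (hermiteSchwartz k x - f x)]
  | succ m ih =>
    obtain ⟨C, hC⟩ := ih (annihilationCLM (creationCLM f))
    refine ⟨C, fun k => ?_⟩
    have heigen : hermiteCoeff k (annihilationCLM (creationCLM f)) =
        2 * (k + 1) * hermiteCoeff k f := by
      rw [hermiteCoeff_annihilationCLM, hermiteCoeff_creationCLM, Nat.add_sub_cancel,
        Nat.cast_succ, ← mul_assoc, Real.mul_self_sqrt (by positivity)]
    calc |hermiteCoeff k f| * (k + 1) ^ (m + 1)
        ≤ 2 * (|hermiteCoeff k f| * (k + 1) ^ (m + 1)) :=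
          le_mul_of_one_le_left (by positivity) one_le_two
      _ = |hermiteCoeff k (annihilationCLM (creationCLM f))| * (k + 1) ^ m := by
        rw [heigen, abs_mul, abs_of_nonneg (by positivity : (0 : ℝ) ≤ 2 * (k + 1))]
        ring
      _ ≤ C := hC k

end Bounds

section HermiteExpansion

open scoped SchwartzMap Topology

/-- The Hermite partial sum `S_n` as an operator on Schwartz functions. -/
noncomputable def hermiteProjection (n : ℕ) : 𝓢(ℝ, ℝ) →L[ℝ] 𝓢(ℝ, ℝ) :=
  ∑ k ∈ Finset.range (n + 1), (hermiteCoeff k).smulRight (hermiteSchwartz k)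

theorem hermiteProjection_eq_sum (n : ℕ) (f : 𝓢(ℝ, ℝ)) :
    hermiteProjection n f = ∑ k ∈ Finset.range (n + 1), hermiteCoeff k f • hermiteSchwartz k := by
  simp [hermiteProjection]

theorem hermiteProjection_apply (n : ℕ) (f : 𝓢(ℝ, ℝ)) (x : ℝ) :
    hermiteProjection n f x =
      ∑ k ∈ Finset.range (n + 1), hermiteCoeff k f * hermiteSchwartz k x := by
  simp [hermiteProjection_eq_sum]

theorem hermitePartialSum_eq_hermiteProjection (n : ℕ) (f : 𝓢(ℝ, ℝ)) :
    hermitePartialSum n f = hermiteProjection n f := by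
  ext x
  simp only [hermitePartialSum, hermiteProjection_apply, hermiteCoeff_apply,
    hermiteSchwartz_apply, mul_comm (f _)]

theorem annihilationCLM_hermiteProjection (n : ℕ) (f : 𝓢(ℝ, ℝ)) :
    annihilationCLM (hermiteProjection (n + 1) f) = hermiteProjection n (annihilationCLM f) := by
  simp_rw [hermiteProjection_eq_sum, map_sum, map_smul, annihilationCLM_hermiteSchwartz,
    hermiteCoeff_annihilationCLM, smul_smul]
  rw [Finset.sum_range_succ']
  simp [mul_comm]

theorem creationCLM_hermiteProjection (n : ℕ) (f : 𝓢(ℝ, ℝ)) :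
    creationCLM (hermiteProjection n f) = hermiteProjection (n + 1) (creationCLM f) := by
  simp_rw [hermiteProjection_eq_sum, map_sum, map_smul, creationCLM_hermiteSchwartz,
    hermiteCoeff_creationCLM, smul_smul]
  rw [Finset.sum_range_succ' _ (n + 1)]
  simp [mul_comm]

theorem two_mul_hermiteCoeff_positionCLM (k : ℕ) (f : 𝓢(ℝ, ℝ)) :
    2 * hermiteCoeff k (positionCLM f) =
      √(2 * k) * hermiteCoeff (k - 1) f + √(2 * (k + 1)) * hermiteCoeff (k + 1) f := by
  rw [← hermiteCoeff_creationCLM, ← hermiteCoeff_annihilationCLM, ← map_add,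
    creationCLM_add_annihilationCLM, map_smul, smul_eq_mul]

/- The three-term recurrences make the sum telescope, as in the Christoffel–Darboux formula. -/
theorem two_mul_hermiteProjection_positionCLM_sub (n : ℕ) (q : 𝓢(ℝ, ℝ)) (x : ℝ) :
    2 * (hermiteProjection n (positionCLM q) x - x * hermiteProjection n q x) =
      √(2 * (n + 1)) * (hermiteCoeff (n + 1) q * hermiteSchwartz n x -
        hermiteCoeff n q * hermiteSchwartz (n + 1) x) := by
  simp only [hermiteProjection_apply]
  induction n with
  | zero =>
    have hcoeff := two_mul_hermiteCoeff_positionCLM 0 q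
    have hrec := two_mul_mul_hermiteSchwartz 0 x
    simp only [Nat.cast_zero, mul_zero, Real.sqrt_zero, zero_mul, zero_add, add_zero] at hcoeff hrec
    simp only [zero_add, Finset.sum_range_one, Nat.cast_zero]
    linear_combination hermiteSchwartz 0 x * hcoeff - hermiteCoeff 0 q * hrec
  | succ n ih =>
    have hcoeff := two_mul_hermiteCoeff_positionCLM (n + 1) q
    have hrec := two_mul_mul_hermiteSchwartz (n + 1) x
    rw [Finset.sum_range_succ, Finset.sum_range_succ _ (n + 1)]
    simp only [Nat.cast_succ, Nat.add_sub_cancel] at hcoeff hrec ⊢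
    linear_combination ih + hermiteSchwartz (n + 1) x * hcoeff - hermiteCoeff (n + 1) q * hrec

theorem tendsto_sqrt_mul_hermiteCoeff_mul_hermiteSchwartz (q : 𝓢(ℝ, ℝ)) (x : ℝ) :
    Tendsto (fun n : ℕ => √(2 * (n + 1)) * (hermiteCoeff (n + 1) q * hermiteSchwartz n x -
      hermiteCoeff n q * hermiteSchwartz (n + 1) x)) atTop (𝓝 0) := by
  obtain ⟨C, hC⟩ := exists_bound_abs_hermiteCoeff_mul_pow q 3
  have hcoeff (k : ℕ) : |hermiteCoeff k q| ≤ C / (k + 1) ^ 3 := by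
    rw [le_div_iff₀ (by positivity)]
    exact hC k
  have hC0 : 0 ≤ C := le_trans (by positivity) (hC 0)
  refine squeeze_zero_norm (fun n => ?_)
    (a := fun n : ℕ => 10 * C * (1 / ((n : ℝ) + 1))) (by
      simpa using tendsto_one_div_add_atTop_nhds_zero_nat.const_mul (10 * C))
  have : (0 : ℝ) ≤ n := n.cast_nonneg
  have hnext : |hermiteCoeff (n + 1) q| ≤ C / (n + 1) ^ 3 := by
    refine (hcoeff (n + 1)).trans ?_
    push_cast
    gcongr
    linarith
  have hsqrt : √(2 * (n + 1)) ≤ (2 * (n + 1) : ℝ) :=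
    Real.sqrt_le_iff.2 ⟨by positivity, by nlinarith⟩
  have hhermite : |hermiteSchwartz n x| ≤ 2 * (n + 1) :=
    (abs_hermiteSchwartz_le n x).trans (by linarith)
  have hhermite' : |hermiteSchwartz (n + 1) x| ≤ 3 * (n + 1) := by
    refine (abs_hermiteSchwartz_le (n + 1) x).trans ?_
    push_cast
    linarith
  rw [norm_mul, Real.norm_of_nonneg (Real.sqrt_nonneg _), Real.norm_eq_abs]
  calc √(2 * (n + 1)) * |hermiteCoeff (n + 1) q * hermiteSchwartz n x -
        hermiteCoeff n q * hermiteSchwartz (n + 1) x|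
      ≤ 2 * (n + 1) * (C / (n + 1) ^ 3 * (2 * (n + 1)) + C / (n + 1) ^ 3 * (3 * (n + 1))) := by
        refine mul_le_mul hsqrt ((abs_sub _ _).trans ?_) (abs_nonneg _) (by positivity)
        rw [abs_mul, abs_mul]
        gcongr
        exact hcoeff n
    _ = 10 * C * (1 / (n + 1)) := by
        field_simp
        ring

theorem hermiteProjection_hermiteSchwartz_zero (n : ℕ) :
    hermiteProjection n (hermiteSchwartz 0) = hermiteSchwartz 0 := by
  rw [hermiteProjection_eq_sum, Finset.sum_range_succ']
  simp [hermiteCoeff_succ_hermiteSchwartz_zero, hermiteCoeff_hermiteSchwartz_self]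

theorem tendsto_hermiteProjection_apply (f : 𝓢(ℝ, ℝ)) (x : ℝ) :
    Tendsto (fun n => hermiteProjection n f x) atTop (𝓝 (f x)) := by
  set c := f x / hermiteSchwartz 0 x
  have hpos : 0 < hermiteSchwartz 0 x := by
    rw [hermiteSchwartz, smul_apply, gaussianSchwartz_apply]
    positivity
  have hvanish : (f - c • hermiteSchwartz 0) x = 0 := by
    simp [c, hpos.ne']
  obtain ⟨q, hq⟩ := exists_schwartzMap_eq_sub_smul hvanish
  have hf : f = c • hermiteSchwartz 0 + (positionCLM q - x • q) := by
    ext y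
    have := hq y
    simp only [sub_apply, smul_apply, add_apply, positionCLM_apply, smul_eq_mul] at this ⊢
    linarith
  have hexpand (n : ℕ) : hermiteProjection n f x = f x +
      √(2 * (n + 1)) * (hermiteCoeff (n + 1) q * hermiteSchwartz n x -
        hermiteCoeff n q * hermiteSchwartz (n + 1) x) / 2 := by
    have hc : c * hermiteSchwartz 0 x = f x := div_mul_cancel₀ _ hpos.ne'
    have hproj := DFunLike.congr_fun (congrArg (hermiteProjection n) hf) x
    simp only [map_add, map_sub, map_smul, hermiteProjection_hermiteSchwartz_zero, add_apply,
      sub_apply, smul_apply, smul_eq_mul] at hproj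
    linear_combination hproj + hc + two_mul_hermiteProjection_positionCLM_sub n q x / 2
  simpa [hexpand] using
    ((tendsto_sqrt_mul_hermiteCoeff_mul_hermiteSchwartz q x).div_const 2).const_add (f x)

end HermiteExpansion

section Convergence

open scoped SchwartzMap Topology

theorem exists_bound_abs_pow_mul_hermiteCoeff_mul_hermiteSchwartz (f : 𝓢(ℝ, ℝ)) (m : ℕ) :
    ∃ C, ∀ (k : ℕ) (x : ℝ),
      |x ^ m * (hermiteCoeff k f * hermiteSchwartz k x)| ≤ C * (1 / ((k + 1 : ℕ) : ℝ) ^ 2) := by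
  obtain ⟨C, hC⟩ := exists_bound_abs_hermiteCoeff_mul_pow f (m + 3)
  refine ⟨(m + 2) ^ (m + 1) * C, fun k x => ?_⟩
  have hk : (0 : ℝ) ≤ k := k.cast_nonneg
  have hm : (0 : ℝ) ≤ m := m.cast_nonneg
  calc |x ^ m * (hermiteCoeff k f * hermiteSchwartz k x)|
      = |hermiteCoeff k f| * (|x| ^ m * |hermiteSchwartz k x|) := by
        rw [abs_mul, abs_mul, abs_pow]
        ring
    _ ≤ |hermiteCoeff k f| * ((m + 2) * (k + 1)) ^ (m + 1) := by
        refine mul_le_mul_of_nonneg_left ?_ (abs_nonneg _)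
        refine (abs_pow_mul_abs_hermiteSchwartz_le m k x).trans ?_
        gcongr
        nlinarith [mul_nonneg hm hk]
    _ = (m + 2) ^ (m + 1) * (|hermiteCoeff k f| * (k + 1) ^ (m + 3)) *
          (1 / ((k + 1 : ℕ) : ℝ) ^ 2) := by
        rw [mul_pow]
        push_cast
        field_simp
        ring
    _ ≤ (m + 2) ^ (m + 1) * C * (1 / ((k + 1 : ℕ) : ℝ) ^ 2) := by
        gcongr
        exact hC k

theorem tendsto_seminorm_zero_hermiteProjection_sub (m : ℕ) (f : 𝓢(ℝ, ℝ)) :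
    Tendsto (fun n => SchwartzMap.seminorm ℝ m 0 (hermiteProjection n f - f)) atTop (𝓝 0) := by
  obtain ⟨C, hC⟩ := exists_bound_abs_pow_mul_hermiteCoeff_mul_hermiteSchwartz f m
  have hsummable : Summable fun k : ℕ => C * (1 / ((k + 1 : ℕ) : ℝ) ^ 2) :=
    ((summable_nat_add_iff 1).2 (Real.summable_one_div_nat_pow.2 one_lt_two)).mul_left C
  have hsum (x : ℝ) : ∑' k, x ^ m * (hermiteCoeff k f * hermiteSchwartz k x) = x ^ m * f x := by
    have hsummable_apply : Summable fun k => x ^ m * (hermiteCoeff k f * hermiteSchwartz k x) :=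
      hsummable.of_norm_bounded fun k => hC k x
    refine (hsummable_apply.hasSum_iff_tendsto_nat.2 ?_).tsum_eq
    rw [← tendsto_add_atTop_iff_nat 1]
    simpa only [hermiteProjection_apply, Finset.mul_sum] using
      (tendsto_hermiteProjection_apply f x).const_mul (x ^ m)
  have huniform := tendstoUniformly_tsum_nat
    (f := fun k x => x ^ m * (hermiteCoeff k f * hermiteSchwartz k x)) hsummable hC
  simp only [hsum, Metric.tendstoUniformly_iff] at huniform
  refine tendsto_order.2 ⟨fun a ha => .of_forall fun n => ha.trans_le (apply_nonneg _ _),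
    fun ε hε => ?_⟩
  filter_upwards [(tendsto_add_atTop_nat 1).eventually (huniform (ε / 2) (half_pos hε))] with n hn
  refine lt_of_le_of_lt ?_ (half_lt_self hε)
  refine SchwartzMap.seminorm_le_bound' ℝ _ _ _ (half_pos hε).le fun x => ?_
  have hx := (hn x).le
  rw [← Finset.mul_sum, ← hermiteProjection_apply, dist_comm, Real.dist_eq, ← mul_sub, abs_mul,
    abs_pow] at hx
  simpa [iteratedDeriv_zero] using hx

theorem seminorm_succ_le_seminorm_derivCLM {F : Type*} [NormedAddCommGroup F] [NormedSpace ℝ F]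
    (m l : ℕ) (f : 𝓢(ℝ, F)) :
    SchwartzMap.seminorm ℝ m (l + 1) f ≤
      SchwartzMap.seminorm ℝ m l (SchwartzMap.derivCLM ℝ F f) := by
  refine SchwartzMap.seminorm_le_bound' ℝ _ _ _ (apply_nonneg _ _) fun x => ?_
  rw [iteratedDeriv_succ']
  exact SchwartzMap.le_seminorm' ℝ m l (SchwartzMap.derivCLM ℝ F f) x

theorem derivCLM_hermiteProjection_sub (n : ℕ) (f : 𝓢(ℝ, ℝ)) :
    SchwartzMap.derivCLM ℝ ℝ (hermiteProjection (n + 1) f - f) =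
      (1 / 2 : ℝ) • (hermiteProjection n (annihilationCLM f) - annihilationCLM f) -
        (1 / 2 : ℝ) • (hermiteProjection (n + 2) (creationCLM f) - creationCLM f) := by
  have hderiv := annihilationCLM_sub_creationCLM (hermiteProjection (n + 1) f - f)
  rw [map_sub, map_sub, annihilationCLM_hermiteProjection, creationCLM_hermiteProjection] at hderiv
  rw [← smul_sub, hderiv, smul_smul]
  norm_num

theorem tendsto_seminorm_hermiteProjection_sub (m l : ℕ) (f : 𝓢(ℝ, ℝ)) :
    Tendsto (fun n => SchwartzMap.seminorm ℝ m l (hermiteProjection n f - f)) atTop (𝓝 0) := by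
  induction l generalizing f with
  | zero => exact tendsto_seminorm_zero_hermiteProjection_sub m f
  | succ l ih =>
    rw [← tendsto_add_atTop_iff_nat 1]
    have hlim := ((ih (annihilationCLM f)).const_mul (1 / 2)).add
      (((tendsto_add_atTop_iff_nat 2).2 (ih (creationCLM f))).const_mul (1 / 2))
    rw [mul_zero, add_zero] at hlim
    refine squeeze_zero (fun n => apply_nonneg _ _) (fun n => ?_) hlim
    refine (seminorm_succ_le_seminorm_derivCLM m l _).trans ?_
    rw [derivCLM_hermiteProjection_sub]
    refine (map_sub_le_add _ _ _).trans_eq ?_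
    simp [map_smul_eq_mul]

theorem tendsto_hermiteProjection (f : 𝓢(ℝ, ℝ)) :
    Tendsto (fun n => hermiteProjection n f) atTop (𝓝 f) := by
  rw [(schwartz_withSeminorms ℝ ℝ ℝ).tendsto_nhds]
  intro i ε hε
  exact (tendsto_seminorm_hermiteProjection_sub i.1 i.2 f).eventually_lt_const hε

open scoped ENNReal

theorem tendsto_eLpNorm_sub_of_tendsto_schwartz {E F ι : Type*}
    [NormedAddCommGroup E] [NormedSpace ℝ E] [MeasurableSpace E] [BorelSpace E]
    [NormedAddCommGroup F] [NormedSpace ℝ F] [SecondCountableTopologyEither E F]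
    {μ : Measure E} [μ.HasTemperateGrowth] {l : Filter ι} {u : ι → 𝓢(E, F)} {f : 𝓢(E, F)}
    (hu : Tendsto u l (𝓝 f)) {p : ℝ≥0∞} (hp : 1 ≤ p) :
    Tendsto (fun i => eLpNorm (u i - f) p μ) l (𝓝 0) := by
  have : Fact (1 ≤ p) := ⟨hp⟩
  have hLp := ((SchwartzMap.toLpCLM ℝ F p μ).continuous.tendsto f).comp hu
  exact (Lp.tendsto_Lp_iff_tendsto_eLpNorm'' _ (fun i => (u i).memLp p μ) f
    (f.memLp p μ)).1 hLp

theorem tendsto_eLpNorm_indicator_compl_Ioo {F ι : Type*} [NormedAddCommGroup F] [NormedSpace ℝ F]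
    {μ : Measure ℝ} {l : Filter ι} {T : ι → ℝ} (hT : Tendsto T l atTop) {f : ℝ → F} {p : ℝ≥0∞}
    (hf : eLpNorm (fun x => x • f x) p μ ≠ ∞) :
    Tendsto (fun i => eLpNorm ((Ioo (-T i) (T i))ᶜ.indicator f) p μ) l (𝓝 0) := by
  have hlim : Tendsto (fun i => ENNReal.ofReal (T i)⁻¹ * eLpNorm (fun x => x • f x) p μ) l
      (𝓝 0) := by
    simpa using ENNReal.Tendsto.mul_const
      (ENNReal.tendsto_ofReal (tendsto_inv_atTop_zero.comp hT)) (Or.inr hf)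
  refine tendsto_of_tendsto_of_tendsto_of_le_of_le' tendsto_const_nhds hlim
    (Eventually.of_forall fun _ => zero_le) ?_
  filter_upwards [hT.eventually_gt_atTop 0] with i hi
  refine eLpNorm_le_mul_eLpNorm_of_ae_le_mul (ae_of_all _ fun x => ?_) p
  rw [norm_smul, ← mul_assoc]
  by_cases hx : x ∈ Ioo (-T i) (T i)
  · rw [indicator_of_notMem (notMem_compl_iff.2 hx), norm_zero]
    positivity
  · rw [indicator_of_mem hx]
    refine le_mul_of_one_le_left (norm_nonneg _) ?_
    rw [mem_Ioo, ← abs_lt, not_lt] at hx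
    rwa [inv_mul_eq_div, one_le_div hi]

theorem hermite_smooth_Lp_convergence_general (f : 𝓢(ℝ, ℝ)) {p : ℝ≥0∞} (hp : 1 ≤ p) {T : ℕ → ℝ}
    (hT : Tendsto T atTop atTop) :
    Tendsto (fun n => eLpNorm (fun x =>
        (Ioo (-T n) (T n)).indicator (hermitePartialSum n f) x - f x) p volume)
      atTop (𝓝 0) := by
  have hmoment : eLpNorm (fun x => x • f x) p volume ≠ ⊤ := by
    simpa only [smul_eq_mul, ← positionCLM_apply] using
      ((positionCLM f).eLpNorm_lt_top p volume).ne
  have hsum := (tendsto_eLpNorm_sub_of_tendsto_schwartz (μ := volume)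
    (tendsto_hermiteProjection f) hp).add (tendsto_eLpNorm_indicator_compl_Ioo hT hmoment)
  rw [add_zero] at hsum
  refine tendsto_of_tendsto_of_tendsto_of_le_of_le tendsto_const_nhds hsum
    (fun _ => zero_le) fun n => ?_
  have hsplit : (fun x => (Ioo (-T n) (T n)).indicator (hermitePartialSum n f) x - f x) =
      (Ioo (-T n) (T n)).indicator (hermiteProjection n f - f) -
        (Ioo (-T n) (T n))ᶜ.indicator f := by
    rw [hermitePartialSum_eq_hermiteProjection]
    ext x
    by_cases hx : x ∈ Ioo (-T n) (T n) <;> simp [hx]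
  have hmeas (s : Set ℝ) (hs : MeasurableSet s) (g : 𝓢(ℝ, ℝ)) :
      AEStronglyMeasurable (s.indicator g) volume := g.continuous.aestronglyMeasurable.indicator hs
  rw [hsplit]
  calc eLpNorm _ p volume
      ≤ eLpNorm ((Ioo (-T n) (T n)).indicator (hermiteProjection n f - f)) p volume +
          eLpNorm ((Ioo (-T n) (T n))ᶜ.indicator f) p volume :=
        eLpNorm_sub_le (hmeas _ measurableSet_Ioo (hermiteProjection n f - f))
          (hmeas _ measurableSet_Ioo.compl f) hp
    _ ≤ eLpNorm (hermiteProjection n f - f) p volume +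
          eLpNorm ((Ioo (-T n) (T n))ᶜ.indicator f) p volume := by
        gcongr
        exact eLpNorm_indicator_le _

end Convergence

/-- **`L^p` convergence of truncated Hermite sums of a smooth compactly supported
function.** -/
theorem hermite_smooth_Lp_convergence (f : ℝ → ℝ)
    (hf : ContDiff ℝ (⊤ : ℕ∞) f) (hsupp : HasCompactSupport f)
    (p : ℝ) (hp : 1 < p)
    (T : ℕ → ℝ) (hTpos : ∀ n, 0 < T n)
    (hTinf : Tendsto T atTop atTop)
    (hTslow : Tendsto (fun n : ℕ => T n / (n : ℝ) ^ ((1 : ℝ) / 34)) atTop (nhds 0)) :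
    Tendsto (fun n : ℕ =>
        eLpNorm (fun x : ℝ =>
            Set.indicator (Set.Ioo (-(T n)) (T n)) (hermitePartialSum n f) x - f x)
          (ENNReal.ofReal p) volume)
      atTop (nhds 0) :=
  hermite_smooth_Lp_convergence_general (hsupp.toSchwartzMap hf)
    (ENNReal.one_le_ofReal.2 hp.le) hTinf
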